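/- (Soundness of the naive VCGen, proved in the Coq development.) Let ψ be a procedure environment, φ a contract environment, c a command, P a precondition and Q a postcondition. Assume: (i) Tfⁿ(φ, ψ); (ii) for all memory states σ, P(σ) implies Taⁿ⟦c⟧(σ, φ); and (iii) for all memory states σ, P(σ) implies Tcⁿ⟦c⟧(σ, φ, λσ'. Q(σ, σ')). Then the Hoare triple ψ ⊨ {P} c {Q} holds. -/

import Mathlib

/-- Memory states: location `x_i` holds value `σ i`. -/
abbrev Mem : Type := ℕ → ℕ

/-- Update `σ[i/n]`: maps `i` to `n` and agrees with `σ` elsewhere. -/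
def Mem.update (σ : Mem) (i n : ℕ) : Mem := fun j => if j = i then n else σ j

inductive Aop : Type
  | add | mul | sub

def Aop.eval : Aop → ℕ → ℕ → ℕ
  | .add => fun m n => m + n
  | .mul => fun m n => m * n
  | .sub => fun m n => m - n

/-- Arithmetic expressions. -/
inductive Aexp : Type
  | const : ℕ → Aexp
  | loc : ℕ → Aexp
  | deref : ℕ → Aexp
  | addr : ℕ → Aexp
  | binop : Aop → Aexp → Aexp → Aexp

def Aexp.eval : Aexp → Mem → ℕ
  | .const n, _ => n
  | .loc i, σ => σ i
  | .deref i, σ => σ (σ i)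
  | .addr i, _ => i
  | .binop o a1 a2, σ => o.eval (a1.eval σ) (a2.eval σ)

inductive Bcmp : Type
  | le | lt | eq

def Bcmp.eval : Bcmp → ℕ → ℕ → Bool
  | .le => fun m n => decide (m ≤ n)
  | .lt => fun m n => decide (m < n)
  | .eq => fun m n => decide (m = n)

/-- Boolean expressions. -/
inductive Bexp : Type
  | tt : Bexp
  | ff : Bexp
  | cmp : Bcmp → Aexp → Aexp → Bexp
  | and : Bexp → Bexp → Bexp
  | or : Bexp → Bexp → Bexp
  | not : Bexp → Bexp

def Bexp.eval : Bexp → Mem → Bool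
  | .tt, _ => true
  | .ff, _ => false
  | .cmp o a1 a2, σ => o.eval (a1.eval σ) (a2.eval σ)
  | .and b1 b2, σ => b1.eval σ && b2.eval σ
  | .or b1 b2, σ => b1.eval σ || b2.eval σ
  | .not b, σ => !(b.eval σ)

/-- Commands, over a type `Y` of procedure names. -/
inductive Com (Y : Type) : Type
  | skip : Com Y
  | assign : ℕ → Aexp → Com Y                      -- x_i := a
  | store : ℕ → Aexp → Com Y                       -- *x_i := a
  | seq : Com Y → Com Y → Com Y
  | assert : (Mem → Prop) → Com Y
  | cond : Bexp → Com Y → Com Y → Com Y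
  | while : Bexp → (Mem → Prop) → Com Y → Com Y
  | call : Y → Com Y

/-- Big-step operational semantics `⟨c, σ⟩ →_ψ σ'`. -/
inductive BigStep {Y : Type} (ψ : Y → Com Y) : Com Y → Mem → Mem → Prop
  | skip (σ : Mem) : BigStep ψ .skip σ σ
  | assign (i : ℕ) (a : Aexp) (σ : Mem) :
      BigStep ψ (.assign i a) σ (σ.update i (a.eval σ))
  | store (i : ℕ) (a : Aexp) (σ : Mem) :
      BigStep ψ (.store i a) σ (σ.update (σ i) (a.eval σ))
  | seq {c1 c2 : Com Y} {σ σ'' σ' : Mem} :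
      BigStep ψ c1 σ σ'' → BigStep ψ c2 σ'' σ' → BigStep ψ (.seq c1 c2) σ σ'
  | assert (P : Mem → Prop) (σ : Mem) : BigStep ψ (.assert P) σ σ
  | condTrue {b : Bexp} {c1 c2 : Com Y} {σ σ' : Mem} :
      b.eval σ = true → BigStep ψ c1 σ σ' → BigStep ψ (.cond b c1 c2) σ σ'
  | condFalse {b : Bexp} {c1 c2 : Com Y} {σ σ' : Mem} :
      b.eval σ = false → BigStep ψ c2 σ σ' → BigStep ψ (.cond b c1 c2) σ σ'
  | whileTrue {b : Bexp} {I : Mem → Prop} {c : Com Y} {σ σ'' σ' : Mem} :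
      b.eval σ = true → BigStep ψ c σ σ'' → BigStep ψ (.while b I c) σ'' σ' →
      BigStep ψ (.while b I c) σ σ'
  | whileFalse {b : Bexp} {I : Mem → Prop} {c : Com Y} {σ : Mem} :
      b.eval σ = false → BigStep ψ (.while b I c) σ σ
  | call {y : Y} {σ σ' : Mem} : BigStep ψ (ψ y) σ σ' → BigStep ψ (.call y) σ σ'

/-- Hoare triple `ψ ⊨ {P} c {Q}`. -/
def HoareTriple {Y : Type} (ψ : Y → Com Y) (P : Mem → Prop) (c : Com Y)
    (Q : Mem → Mem → Prop) : Prop :=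
  ∀ σ σ' : Mem, P σ → BigStep ψ c σ σ' → Q σ σ'

/-- A contract: a precondition and a postcondition. -/
abbrev Contract : Type := (Mem → Prop) × (Mem → Mem → Prop)

/-- Contract validity `ψ ⊨ φ`. -/
def ContractValid {Y : Type} (ψ : Y → Com Y) (φ : Y → Contract) : Prop :=
  ∀ y : Y, HoareTriple ψ (φ y).1 (.call y) (φ y).2

/-- Pointwise big-step execution of a sequence of commands. -/
inductive BigSteps {Y : Type} (ψ : Y → Com Y) : List (Com Y) → List Mem → List Mem → Prop
  | nil : BigSteps ψ [] [] []
  | cons {c : Com Y} {cs : List (Com Y)} {σ σ' : Mem} {σs σs' : List Mem} :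
      BigStep ψ c σ σ' → BigSteps ψ cs σs σs' →
      BigSteps ψ (c :: cs) (σ :: σs) (σ' :: σs')

/-- Relational Hoare triple `ψ ⊨ {P} (c_k) {Q}`. -/
def RHoare {Y : Type} (ψ : Y → Com Y) (P : List Mem → Prop) (cs : List (Com Y))
    (Q : List Mem → List Mem → Prop) : Prop :=
  ∀ σs σs' : List Mem, P σs → BigSteps ψ cs σs σs' → Q σs σs'

/-- A relational contract: a relational precondition and postcondition. -/
abbrev RContract : Type := (List Mem → Prop) × (List Mem → List Mem → Prop)

/-- Relational contract validity `ψ ⊨ Φ`. -/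
def RContractValid {Y : Type} (ψ : Y → Com Y) (Φ : List Y → RContract) : Prop :=
  ∀ ys : List Y, ys ≠ [] → RHoare ψ (Φ ys).1 (ys.map Com.call) (Φ ys).2

/-- Optimized main VC function `Tc`. -/
def Tc {Y : Type} : Com Y → Mem → Mem → (Y → Contract) → (Prop → Prop) → Prop
  | .skip, σ, σ', _, f => f (σ = σ')
  | .assign i a, σ, σ', _, f => f (σ' = σ.update i (a.eval σ))
  | .store i a, σ, σ', _, f => f (σ' = σ.update (σ i) (a.eval σ))
  | .assert P', σ, σ', _, f => f (P' σ ∧ σ = σ')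
  | .seq c0 c1, σ, σ', φ, f =>
      ∀ σ'' : Mem, Tc c0 σ σ'' φ (fun p1 => Tc c1 σ'' σ' φ (fun p2 => f (p1 ∧ p2)))
  | .cond b c0 c1, σ, σ', φ, f =>
      Tc c0 σ σ' φ (fun p1 => Tc c1 σ σ' φ (fun p2 =>
        f ((b.eval σ = true → p1) ∧ (b.eval σ = false → p2))))
  | .call y, σ, σ', φ, f => f ((φ y).1 σ ∧ (φ y).2 σ σ')
  | .while b I _, σ, σ', _, f => f (I σ ∧ I σ' ∧ b.eval σ' = false)

/-- Optimized auxiliary VC function `Ta`. -/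
def Ta {Y : Type} : Com Y → Mem → (Y → Contract) → Prop
  | .skip, _, _ => True
  | .assign _ _, _, _ => True
  | .store _ _, _, _ => True
  | .assert P', σ, _ => P' σ
  | .seq c0 c1, σ, φ =>
      Ta c0 σ φ ∧ ∀ σ' : Mem, Tc c0 σ σ' φ (fun p => p → Ta c1 σ' φ)
  | .cond b c0 c1, σ, φ =>
      (b.eval σ = true → Ta c0 σ φ) ∧ (b.eval σ = false → Ta c1 σ φ)
  | .call y, σ, φ => (φ y).1 σ
  | .while b I c, σ, φ =>
      I σ ∧ (∀ σ' : Mem, I σ' → b.eval σ' = true → Ta c σ' φ) ∧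
      (∀ σ' σ'' : Mem, I σ' → Tc c σ' σ'' φ (fun p => p → I σ''))

/-- Optimized procedure VC `Tf`. -/
def Tf {Y : Type} (φ : Y → Contract) (ψ : Y → Com Y) : Prop :=
  ∀ (y : Y) (σ σ' : Mem), (φ y).1 σ →
    Ta (ψ y) σ φ ∧ Tc (ψ y) σ σ' φ (fun p => p → (φ y).2 σ σ')

/-- Naive main VC function `Tcⁿ`. -/
def Tcn {Y : Type} : Com Y → Mem → (Y → Contract) → (Mem → Prop) → Prop
  | .skip, σ, _, P => P σ
  | .assign i a, σ, _, P => P (σ.update i (a.eval σ))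
  | .store i a, σ, _, P => P (σ.update (σ i) (a.eval σ))
  | .assert P', σ, _, P => P' σ → P σ
  | .seq c0 c1, σ, φ, P => Tcn c0 σ φ (fun σ'' => Tcn c1 σ'' φ P)
  | .cond b c0 c1, σ, φ, P =>
      (b.eval σ = true → Tcn c0 σ φ P) ∧ (b.eval σ = false → Tcn c1 σ φ P)
  | .call y, σ, φ, P => ∀ σ' : Mem, (φ y).1 σ ∧ (φ y).2 σ σ' → P σ'
  | .while b I _, σ, _, P => ∀ σ' : Mem, I σ ∧ I σ' ∧ b.eval σ' = false → P σ'

/-- Naive auxiliary VC function `Taⁿ`. -/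
def Tan {Y : Type} : Com Y → Mem → (Y → Contract) → Prop
  | .skip, _, _ => True
  | .assign _ _, _, _ => True
  | .store _ _, _, _ => True
  | .assert P', σ, _ => P' σ
  | .seq c0 c1, σ, φ => Tan c0 σ φ ∧ Tcn c0 σ φ (fun σ' => Tan c1 σ' φ)
  | .cond b c0 c1, σ, φ =>
      (b.eval σ = true → Tan c0 σ φ) ∧ (b.eval σ = false → Tan c1 σ φ)
  | .call y, σ, φ => (φ y).1 σ
  | .while b I c, σ, φ =>
      I σ ∧ (∀ σ' : Mem, I σ' → b.eval σ' = true → Tan c σ' φ ∧ Tcn c σ' φ I)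

/-- Naive procedure VC `Tfⁿ`. -/
def Tfn {Y : Type} (φ : Y → Contract) (ψ : Y → Com Y) : Prop :=
  ∀ (y : Y) (σ : Mem), (φ y).1 σ →
    Tan (ψ y) σ φ ∧ Tcn (ψ y) σ φ (fun σ' => (φ y).2 σ σ')

/-- Relational VC function `Tr` (recursion over the sequence of commands). -/
def Tr {Y : Type} : List (Com Y) → List Mem → List Mem → (Y → Contract) →
    (Prop → Prop) → Prop
  | [], [], [], _, f => f True
  | c :: cs, σ :: σs, σ' :: σs', φ, f =>
      Tc c σ σ' φ (fun pn => Tr cs σs σs' φ (fun pm => f (pn ∧ pm)))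
  | _, _, _, _, _ => True

/-- Relational auxiliary VC function `Ta_r`. -/
def Tar {Y : Type} : List (Com Y) → List Mem → (Y → Contract) → Prop
  | [], [], _ => True
  | c :: cs, σ :: σs, φ => Ta c σ φ ∧ Tar cs σs φ
  | _, _, _ => True

/-- `Proccall(y, σ, σ', ψ)`. -/
def Proccall {Y : Type} (y : Y) (σ σ' : Mem) (ψ : Y → Com Y) : Prop :=
  BigStep ψ (.call y) σ σ'

/-- `Procpred`: all the calls of the sequence have taken place. -/
def Procpred {Y : Type} (ψ : Y → Com Y) : List Y → List Mem → List Mem → Prop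
  | [], [], [] => True
  | y :: ys, σ :: σs, σ' :: σs' => Proccall y σ σ' ψ ∧ Procpred ψ ys σs σs'
  | _, _, _ => False

/-- `Tpr`: translation of the relational contracts into a logical formula. -/
def Tpr {Y : Type} (Φ : List Y → RContract) (ψ : Y → Com Y) : Prop :=
  ∀ (ys : List Y) (σs σs' : List Mem), ys ≠ [] →
    Procpred ψ ys σs σs' → (Φ ys).1 σs → (Φ ys).2 σs σs'

/-- `Φcall`: reduce singleton relational contracts to standard contracts with
tracked calls. -/
def Phicall {Y : Type} (Φ : List Y → RContract) (ψ : Y → Com Y) : Y → Contract :=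
  fun y =>
    (fun σ => (Φ [y]).1 [σ],
     fun σ σ' => (Φ [y]).2 [σ] [σ'] ∧ Proccall y σ σ' ψ)

/-- Relational procedure VC `Tf_r`. -/
def Tfr {Y : Type} (Φ : List Y → RContract) (ψ : Y → Com Y) : Prop :=
  ∀ (ys : List Y) (σs σs' : List Mem) (ψ' : Y → Com Y),
    (Φ ys).1 σs → Tpr Φ ψ' →
    Tar (ys.map ψ) σs (Phicall Φ ψ') ∧
    Tr (ys.map ψ) σs σs' (Phicall Φ ψ')
      (fun p => p → (Φ ys).2 σs σs')

/-- The recursive summation command `c_sum`. -/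
def csum : Com Unit :=
  .cond (.cmp .lt (.loc 1) (.loc 2))
    (.seq (.assign 3 (.binop .add (.loc 3) (.loc 1)))
      (.seq (.assign 1 (.binop .add (.loc 1) (.const 1)))
        (.call ())))
    .skip

/-- The procedure environment binding `y_sum` to `c_sum`. -/
def psum : Unit → Com Unit := fun _ => csum

/-!
`Taⁿ⟦c⟧(σ, φ) ∧ Tcⁿ⟦c⟧(σ, φ, P)` behaves like a weakest precondition that can be unfolded along an
execution: since `Tcⁿ` is monotone and commutes with conjunction in `P`, the condition for `c0; c1`
is the condition for `c0` with the condition for `c1` as target, that for a loop entered with a true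
guard passes to the body with the condition for the loop as target, and, under `Tfⁿ`, that for a
call passes to the procedure body. Each unfolding mirrors a big-step rule, so induction on the
execution reaches `P`. Recursive procedures need no fixed point, because the derivation of the
body's execution is smaller than that of the call.
-/

section

variable {Y : Type} {φ : Y → Contract} {ψ : Y → Com Y} {P Q : Mem → Prop} {σ σ' : Mem}

theorem Tcn.mono {c : Com Y} (hPQ : ∀ τ, P τ → Q τ) (h : Tcn c σ φ P) : Tcn c σ φ Q := by
  induction c generalizing P Q σ with
  | skip | assign | store => exact hPQ _ h
  | assert => exact fun hA => hPQ _ (h hA)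
  | seq _ _ ih₀ ih₁ => exact ih₀ (fun _ => ih₁ hPQ) h
  | cond _ _ _ ih₀ ih₁ => exact ⟨fun hb => ih₀ hPQ (h.1 hb), fun hb => ih₁ hPQ (h.2 hb)⟩
  -- `while` and `call` both quantify over the states reached on exit.
  | _ => exact fun τ hτ => hPQ τ (h τ hτ)

theorem Tcn.and_iff {c : Com Y} :
    Tcn c σ φ (fun τ => P τ ∧ Q τ) ↔ Tcn c σ φ P ∧ Tcn c σ φ Q := by
  induction c generalizing P Q σ with
  | skip | assign | store => exact Iff.rfl
  | assert => exact imp_and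
  | seq _ _ ih₀ ih₁ => simp only [Tcn, ih₀, ih₁]
  | cond _ _ _ ih₀ ih₁ => simp only [Tcn, ih₀, ih₁, imp_and, and_and_and_comm]
  | _ => simp only [Tcn, imp_and, forall_and]

/-- The full naive verification condition for `c` to establish `P` from the state `σ`: the main
and the auxiliary conditions together. The state comes last, so that `NaiveVC φ c P` is itself a
predicate on memory states and can be the target of another condition. -/
def NaiveVC (φ : Y → Contract) (c : Com Y) (P : Mem → Prop) (σ : Mem) : Prop :=
  Tan c σ φ ∧ Tcn c σ φ P

namespace NaiveVC

theorem seq_iff {c₀ c₁ : Com Y} :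
    NaiveVC φ (.seq c₀ c₁) P σ ↔ NaiveVC φ c₀ (NaiveVC φ c₁ P) σ :=
  and_assoc.trans (and_congr_right' Tcn.and_iff.symm)

theorem cond_iff {b : Bexp} {c₀ c₁ : Com Y} :
    NaiveVC φ (.cond b c₀ c₁) P σ ↔
      (b.eval σ = true → NaiveVC φ c₀ P σ) ∧ (b.eval σ = false → NaiveVC φ c₁ P σ) := by
  simp only [NaiveVC, Tan, Tcn, imp_and, and_and_and_comm]

theorem while_unfold {b : Bexp} {I : Mem → Prop} {c : Com Y}
    (h : NaiveVC φ (.while b I c) P σ) (hb : b.eval σ = true) :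
    NaiveVC φ c (NaiveVC φ (.while b I c) P) σ := by
  obtain ⟨⟨hI, hBody⟩, hExit⟩ := h
  obtain ⟨hAux, hPreserve⟩ := hBody σ hI hb
  exact ⟨hAux, hPreserve.mono fun _ hIτ => ⟨⟨hIτ, hBody⟩, fun τ' hτ' => hExit τ' ⟨hI, hτ'.2⟩⟩⟩

theorem while_exit {b : Bexp} {I : Mem → Prop} {c : Com Y}
    (h : NaiveVC φ (.while b I c) P σ) (hb : b.eval σ = false) : P σ :=
  h.2 σ ⟨h.1.1, h.1.1, hb⟩

theorem call_unfold {y : Y} (hf : Tfn φ ψ) (h : NaiveVC φ (.call y) P σ) :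
    NaiveVC φ (ψ y) P σ := by
  obtain ⟨hPre, hPost⟩ := h
  obtain ⟨hAux, hMain⟩ := hf y σ hPre
  exact ⟨hAux, hMain.mono fun τ hτ => hPost τ ⟨hPre, hτ⟩⟩

theorem post_of_bigStep {c : Com Y} (hf : Tfn φ ψ) (hs : BigStep ψ c σ σ')
    (h : NaiveVC φ c P σ) : P σ' := by
  induction hs generalizing P with
  | skip | assign | store => exact h.2
  | assert => exact h.2 h.1
  | seq _ _ ih₀ ih₁ => exact ih₁ (ih₀ (seq_iff.1 h))
  | condTrue hb _ ih => exact ih ((cond_iff.1 h).1 hb)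
  | condFalse hb _ ih => exact ih ((cond_iff.1 h).2 hb)
  | whileTrue hb _ _ ihBody ihLoop => exact ihLoop (ihBody (h.while_unfold hb))
  | whileFalse hb => exact h.while_exit hb
  | call _ ih => exact ih (h.call_unfold hf)

end NaiveVC

end

/-- Soundness of the naive VCGen. -/
theorem naive_vcgen_sound {Y : Type} (ψ : Y → Com Y) (φ : Y → Contract)
    (c : Com Y) (P : Mem → Prop) (Q : Mem → Mem → Prop)
    (h1 : Tfn φ ψ)
    (h2 : ∀ σ : Mem, P σ → Tan c σ φ)
    (h3 : ∀ σ : Mem, P σ → Tcn c σ φ (fun σ' => Q σ σ')) :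
    HoareTriple ψ P c Q :=
  fun σ _ hP hs => NaiveVC.post_of_bigStep h1 hs ⟨h2 σ hP, h3 σ hP⟩
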